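/- arXiv:1504.04250 — 3 statements merged into one kernel-verified Lean document; each statement's English description precedes it below -/
import Mathlib

section
/- Let Y be a real Banach space and let f : K_{ω,1} → Y be a bi-Lipschitz embedding. Then for every ε > 0 there exists i₀ ∈ ℕ such that ‖f(r) − f(t_{i₀})‖ ≤ 2·Lip(f)·(1 − β̄_Y(2/dist(f))) + ε. -/
open Set Function Filter

open scoped ENNReal

attribute [local instance] Classical.propDecidable

noncomputable section

def LipUB {α β : Type*} (dα : α → α → ℝ) (dβ : β → β → ℝ) (f : α → β) (L : ℝ) : Prop :=
  ∀ a b : α, dβ (f a) (f b) ≤ L * dα a b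

def CoLipUB {α β : Type*} (dα : α → α → ℝ) (dβ : β → β → ℝ) (f : α → β) (C : ℝ) : Prop :=
  ∀ a b : α, dα a b ≤ C * dβ (f a) (f b)

def IsBiLipEmb {α β : Type*} (dα : α → α → ℝ) (dβ : β → β → ℝ) (f : α → β) : Prop :=
  Function.Injective f ∧ ∃ L C : ℝ, LipUB dα dβ f L ∧ CoLipUB dα dβ f C

def distortionSet (α β : Type*) (dα : α → α → ℝ) (dβ : β → β → ℝ) : Set ℝ :=
  {D | ∃ f : α → β, Function.Injective f ∧ ∃ L C : ℝ,
    LipUB dα dβ f L ∧ CoLipUB dα dβ f C ∧ D = L * C}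

def cDist (α β : Type*) (dα : α → α → ℝ) (dβ : β → β → ℝ) : ℝ≥0∞ :=
  ⨅ D ∈ distortionSet α β dα dβ, ENNReal.ofReal D
def lipConst {α β : Type*} (dα : α → α → ℝ) (dβ : β → β → ℝ) (f : α → β) : ℝ :=
  sSup {r : ℝ | ∃ a b : α, dα a b ≠ 0 ∧ r = dβ (f a) (f b) / dα a b}

def colipConst {α β : Type*} (dα : α → α → ℝ) (dβ : β → β → ℝ) (f : α → β) : ℝ :=
  sSup {r : ℝ | ∃ a b : α, dβ (f a) (f b) ≠ 0 ∧ r = dα a b / dβ (f a) (f b)}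

def distortionOf {α β : Type*} (dα : α → α → ℝ) (dβ : β → β → ℝ) (f : α → β) : ℝ :=
  lipConst dα dβ f * colipConst dα dβ f
def rolewiczSet (Y : Type*) [SeminormedAddCommGroup Y] (t : ℝ) : Set ℝ :=
  {s | ∃ x : Y, ‖x‖ ≤ 1 ∧ ∃ y : ℕ → Y, (∀ i, ‖y i‖ ≤ 1) ∧
    (∀ n m : ℕ, n ≠ m → t ≤ ‖y n - y m‖) ∧ s = ⨅ i, ‖x - y i‖ / 2}

def rolewiczMod (Y : Type*) [SeminormedAddCommGroup Y] (t : ℝ) : ℝ :=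
  1 - sSup (rolewiczSet Y t)

def HasBeta (Y : Type*) [SeminormedAddCommGroup Y] : Prop :=
  ∀ t : ℝ, 0 < t → t ≤ 2 → 0 < rolewiczMod Y t

def HasBetaP (Y : Type*) [SeminormedAddCommGroup Y] (p γ : ℝ) : Prop :=
  ∀ t : ℝ, 0 < t → t ≤ 2 → (rolewiczSet Y t).Nonempty → γ * t ^ p ≤ rolewiczMod Y t
inductive Umbel : Type | r | b | t (i : ℕ)

def uDist : Umbel → Umbel → ℝ
  | Umbel.r, Umbel.r => 0
  | Umbel.b, Umbel.b => 0
  | Umbel.t i, Umbel.t j => if i = j then 0 else 2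
  | Umbel.r, Umbel.b => 1
  | Umbel.b, Umbel.r => 1
  | Umbel.r, Umbel.t _ => 2
  | Umbel.t _, Umbel.r => 2
  | Umbel.b, Umbel.t _ => 1
  | Umbel.t _, Umbel.b => 1

/-!
Rescale by `1 / Lip f` and put `f b` at the origin: `f r` and the `f (t i)` land in the unit ball,
and the images of the `t i` are `2 / dist f`-separated. The infimum defining the (β)-modulus
therefore bounds `⨅ i, ‖f r - f (t i)‖`, and some `i₀` comes within `ε` of this infimum.
-/

section BestConstants

variable {α β : Type*} {dα : α → α → ℝ} {dβ : β → β → ℝ} {f : α → β} {L C : ℝ}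

lemma le_sSup_div_mul {u v : α → β → ℝ} {K : ℝ} (hv : ∀ a b, 0 ≤ v a b)
    (huv : ∀ a b, u a b ≤ K * v a b) (a : α) (b : β) :
    u a b ≤ sSup {r : ℝ | ∃ a b, v a b ≠ 0 ∧ r = u a b / v a b} * v a b := by
  rcases (hv a b).eq_or_lt with hab | hab
  · simpa [← hab] using huv a b
  · have hbdd : BddAbove {r : ℝ | ∃ a b, v a b ≠ 0 ∧ r = u a b / v a b} := by
      refine ⟨K, ?_⟩
      rintro _ ⟨a, b, hne, rfl⟩
      exact (div_le_iff₀ ((hv a b).lt_of_ne' hne)).2 (huv a b)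
    exact (div_le_iff₀ hab).1 (le_csSup hbdd ⟨a, b, hab.ne', rfl⟩)

lemma LipUB.lipConst (hf : LipUB dα dβ f L) (hα : ∀ a a', 0 ≤ dα a a') :
    LipUB dα dβ f (lipConst dα dβ f) :=
  le_sSup_div_mul hα hf

lemma CoLipUB.colipConst (hf : CoLipUB dα dβ f C) (hβ : ∀ a a', 0 ≤ dβ (f a) (f a')) :
    CoLipUB dα dβ f (colipConst dα dβ f) :=
  le_sSup_div_mul hβ hf

end BestConstants

section Rolewicz

variable {Y : Type*} [SeminormedAddCommGroup Y]

lemma bddAbove_rolewiczSet (t : ℝ) : BddAbove (rolewiczSet Y t) := by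
  refine ⟨1, ?_⟩
  rintro _ ⟨x, hx, y, hy, -, rfl⟩
  have hbdd : BddBelow (range fun i => ‖x - y i‖ / 2) :=
    ⟨0, forall_mem_range.2 fun i => by positivity⟩
  calc ⨅ i, ‖x - y i‖ / 2 ≤ ‖x - y 0‖ / 2 := ciInf_le hbdd 0
    _ ≤ (‖x‖ + ‖y 0‖) / 2 := by gcongr; exact norm_sub_le x (y 0)
    _ ≤ 1 := by linarith [hy 0]

lemma iInf_norm_sub_div_two_le_one_sub_rolewiczMod {x : Y} {y : ℕ → Y} {t : ℝ} (hx : ‖x‖ ≤ 1)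
    (hy : ∀ i, ‖y i‖ ≤ 1) (hsep : ∀ n m, n ≠ m → t ≤ ‖y n - y m‖) :
    ⨅ i, ‖x - y i‖ / 2 ≤ 1 - rolewiczMod Y t := by
  rw [rolewiczMod, sub_sub_cancel]
  exact le_csSup (bddAbove_rolewiczSet t) ⟨x, hx, y, hy, hsep, rfl⟩

lemma iInf_norm_sub_le_mul_one_sub_rolewiczMod [NormedSpace ℝ Y] {c x : Y} {y : ℕ → Y} {R s : ℝ}
    (hR : 0 < R) (hx : ‖x - c‖ ≤ R) (hy : ∀ i, ‖y i - c‖ ≤ R)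
    (hsep : ∀ n m, n ≠ m → s ≤ ‖y n - y m‖) :
    ⨅ i, ‖x - y i‖ ≤ 2 * R * (1 - rolewiczMod Y (s / R)) := by
  let φ : Y → Y := fun v => R⁻¹ • (v - c)
  have norm_φ (v : Y) : ‖φ v‖ = ‖v - c‖ / R := by
    rw [norm_smul, norm_inv, Real.norm_of_nonneg hR.le, inv_mul_eq_div]
  have norm_φ_sub (u v : Y) : ‖φ u - φ v‖ = ‖u - v‖ / R := by
    rw [← smul_sub, sub_sub_sub_cancel_right, norm_smul, norm_inv, Real.norm_of_nonneg hR.le,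
      inv_mul_eq_div]
  have norm_φ_le {v : Y} (hv : ‖v - c‖ ≤ R) : ‖φ v‖ ≤ 1 :=
    norm_φ v ▸ div_le_one_of_le₀ hv hR.le
  have φ_sep (n m : ℕ) (hnm : n ≠ m) : s / R ≤ ‖φ (y n) - φ (y m)‖ := by
    rw [norm_φ_sub]
    gcongr
    exact hsep n m hnm
  calc ⨅ i, ‖x - y i‖ = ⨅ i, 2 * R * (‖φ x - φ (y i)‖ / 2) := by
        congr! 2 with i
        rw [norm_φ_sub]
        field_simp
    _ = 2 * R * ⨅ i, ‖φ x - φ (y i)‖ / 2 := (Real.mul_iInf_of_nonneg (by positivity) _).symm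
    _ ≤ 2 * R * (1 - rolewiczMod Y (s / R)) := by
        gcongr
        exact iInf_norm_sub_div_two_le_one_sub_rolewiczMod (norm_φ_le hx)
          (fun i => norm_φ_le (hy i)) φ_sep

end Rolewicz

section Umbel

variable {Y : Type*} [SeminormedAddCommGroup Y] [NormedSpace ℝ Y] {f : Umbel → Y}

lemma uDist_nonneg (p q : Umbel) : 0 ≤ uDist p q := by
  cases p <;> cases q <;> grind [uDist]

lemma iInf_norm_r_sub_t_le {L C : ℝ}
    (hL : LipUB uDist (fun y z : Y => dist y z) f L)
    (hC : CoLipUB uDist (fun y z : Y => dist y z) f C) :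
    ⨅ i, ‖f .r - f (.t i)‖ ≤ 2 * L * (1 - rolewiczMod Y (2 / (L * C))) := by
  have norm_r_sub_b_le : ‖f .r - f .b‖ ≤ L := by
    simpa [uDist, dist_eq_norm] using hL .r .b
  have norm_t_sub_b_le (i : ℕ) : ‖f (.t i) - f .b‖ ≤ L := by
    simpa [uDist, dist_eq_norm] using hL (.t i) .b
  have one_le : 1 ≤ C * ‖f .r - f .b‖ := by
    simpa [uDist, dist_eq_norm] using hC .r .b
  have C_pos : 0 < C := pos_of_mul_pos_left (one_pos.trans_le one_le) (norm_nonneg _)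
  have L_pos : 0 < L :=
    (pos_of_mul_pos_right (one_pos.trans_le one_le) C_pos.le).trans_le norm_r_sub_b_le
  have t_sep (n m : ℕ) (hnm : n ≠ m) : 2 / C ≤ ‖f (.t n) - f (.t m)‖ := by
    rw [div_le_iff₀' C_pos]
    simpa [uDist, hnm, dist_eq_norm] using hC (.t n) (.t m)
  rw [mul_comm L C, ← div_div]
  exact iInf_norm_sub_le_mul_one_sub_rolewiczMod L_pos norm_r_sub_b_le norm_t_sub_b_le t_sep

theorem umbel_pedicel_bending_general (hf : IsBiLipEmb uDist (fun y z : Y => dist y z) f)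
    {ε : ℝ} (hε : 0 < ε) :
    ∃ i₀ : ℕ, ‖f .r - f (.t i₀)‖ ≤
      2 * lipConst uDist (fun y z : Y => dist y z) f *
        (1 - rolewiczMod Y (2 / distortionOf uDist (fun y z : Y => dist y z) f)) + ε := by
  obtain ⟨-, L, C, hL, hC⟩ := hf
  have hinf := iInf_norm_r_sub_t_le (hL.lipConst uDist_nonneg)
    (hC.colipConst fun _ _ => dist_nonneg)
  obtain ⟨i₀, hi₀⟩ := exists_lt_of_ciInf_lt (hinf.trans_lt (lt_add_of_pos_right _ hε))
  exact ⟨i₀, hi₀.le⟩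

end Umbel

/-- Umbel pedicel bending lemma, Lemma 2.2:
for every bi-Lipschitz embedding `f` of the countably branching star `K_{ω,1}`
(in umbel configuration) into a Banach space `Y`, for every `ε > 0` there is `i₀`
with `‖f r - f t_{i₀}‖ ≤ 2 Lip(f) (1 - β̄_Y(2 / dist f)) + ε`. -/
theorem umbel_pedicel_bending
    (Y : Type*) [NormedAddCommGroup Y] [NormedSpace ℝ Y] [CompleteSpace Y]
    (f : Umbel → Y)
    (hf : IsBiLipEmb uDist (fun a b : Y => dist a b) f) :
    ∀ ε : ℝ, 0 < ε → ∃ i₀ : ℕ,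
      ‖f Umbel.r - f (Umbel.t i₀)‖ ≤
        2 * lipConst uDist (fun a b : Y => dist a b) f *
          (1 - rolewiczMod Y (2 / distortionOf uDist (fun a b : Y => dist a b) f)) + ε :=
  fun _ hε => umbel_pedicel_bending_general hf hε

end
end

section
/- Let Y be a real Banach space admitting an equivalent norm with property (β). Then sup_{h≥1} c_Y(T^ω_h) = ∞, i.e., for every M > 0 there exists h ∈ ℕ with c_Y(T^ω_h) > M. -/
open Set Function Filter

open scoped ENNReal

attribute [local instance] Classical.propDecidable

noncomputable section

def rolewiczSetN {Y : Type*} [AddCommGroup Y] (N : Y → ℝ) (t : ℝ) : Set ℝ :=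
  {s | ∃ x : Y, N x ≤ 1 ∧ ∃ y : ℕ → Y, (∀ i, N (y i) ≤ 1) ∧
    (∀ n m : ℕ, n ≠ m → t ≤ N (y n - y m)) ∧ s = ⨅ i, N (x - y i) / 2}

def rolewiczModN {Y : Type*} [AddCommGroup Y] (N : Y → ℝ) (t : ℝ) : ℝ :=
  1 - sSup (rolewiczSetN N t)

def IsEquivNorm (Y : Type*) [SeminormedAddCommGroup Y] [NormedSpace ℝ Y] (N : Y → ℝ) : Prop :=
  (∀ x y : Y, N (x + y) ≤ N x + N y) ∧ (∀ (c : ℝ) (x : Y), N (c • x) = |c| * N x) ∧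
  ∃ a b : ℝ, 0 < a ∧ a ≤ b ∧ ∀ y : Y, a * ‖y‖ ≤ N y ∧ N y ≤ b * ‖y‖

def AdmitsBetaNorm (Y : Type*) [SeminormedAddCommGroup Y] [NormedSpace ℝ Y] : Prop :=
  ∃ N : Y → ℝ, IsEquivNorm Y N ∧ ∀ t : ℝ, 0 < t → t ≤ 2 → 0 < rolewiczModN N t

def AdmitsBetaPNorm (Y : Type*) [SeminormedAddCommGroup Y] [NormedSpace ℝ Y] (p γ : ℝ) : Prop :=
  ∃ N : Y → ℝ, IsEquivNorm Y N ∧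
    ∀ t : ℝ, 0 < t → t ≤ 2 → (rolewiczSetN N t).Nonempty → γ * t ^ p ≤ rolewiczModN N t
def lcpLen : List ℕ → List ℕ → ℕ
  | a :: x, b :: y => if a = b then lcpLen x y + 1 else 0
  | _, _ => 0

def treeDist (x y : List ℕ) : ℝ :=
  (x.length : ℝ) + (y.length : ℝ) - 2 * (lcpLen x y : ℝ)

def TreeOmega (h : ℕ) : Type := {x : List ℕ // x.length ≤ h}

def tDist (h : ℕ) : TreeOmega h → TreeOmega h → ℝ := fun x y => treeDist x.1 y.1

/-!
In a space with property (β), consider a fork with centre `w`: a point `u` and a separated sequence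
`y i`, all within distance `r` of `w`. Then some `y i` is at distance less than `2 * θ * r` from
`u`, where `θ < 1` depends only on the ratio of the separation to `r`. Given a noncontractive map
of the tree of height `2 * h` with edges of length at most `L`, apply this to the images of every
vertex `u`, of a child `w` of `u` and of the children `y i` of `w`. Restricting to the selected
grandchildren and halving gives a noncontractive map of the tree of height `h` with edges of length
at most `θ * L`. Starting from height `2 ^ n`, iteration forces `1 ≤ θ ^ n * L`, so `L` cannot stay
bounded as `n` grows.
-/

section Tree

@[simp]
theorem lcpLen_nil_left (x : List ℕ) : lcpLen [] x = 0 := by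
  cases x <;> rfl

@[simp]
theorem lcpLen_nil_right (x : List ℕ) : lcpLen x [] = 0 := by
  cases x <;> rfl

theorem lcpLen_append_append (z x y : List ℕ) :
    lcpLen (z ++ x) (z ++ y) = z.length + lcpLen x y := by
  induction z with
  | nil => simp
  | cons a z ih =>
    simp only [List.cons_append, lcpLen, ↓reduceIte, ih, List.length_cons]
    omega

theorem treeDist_append_append (z x y : List ℕ) :
    treeDist (z ++ x) (z ++ y) = treeDist x y := by
  simp only [treeDist, lcpLen_append_append, List.length_append]
  push_cast
  ring

theorem treeDist_append_left (z x : List ℕ) : treeDist (z ++ x) z = x.length := by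
  simpa [treeDist] using treeDist_append_append z x []

theorem treeDist_append_singleton_of_ne (z : List ℕ) {i j : ℕ} (hij : i ≠ j) :
    treeDist (z ++ [i]) (z ++ [j]) = 2 := by
  rw [treeDist_append_append]
  norm_num [treeDist, lcpLen, hij]

/-- The embedding of the tree into itself that doubles distances by inserting, after each step from
a vertex `v` to its child `v ++ [n]`, a step to the child of `v ++ [n]` numbered `g v n`. The list
`doublePath g z x` is the path followed by the image of `x` from the vertex `z` already reached. -/
def doublePath (g : List ℕ → ℕ → ℕ) : List ℕ → List ℕ → List ℕ
  | _, [] => []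
  | z, n :: x => n :: g z n :: doublePath g (z ++ [n, g z n]) x

theorem length_doublePath (g : List ℕ → ℕ → ℕ) (z x : List ℕ) :
    (doublePath g z x).length = 2 * x.length := by
  induction x generalizing z with
  | nil => rfl
  | cons n x ih =>
    simp only [doublePath, List.length_cons, ih]
    omega

theorem lcpLen_doublePath (g : List ℕ → ℕ → ℕ) (z x y : List ℕ) :
    lcpLen (doublePath g z x) (doublePath g z y) = 2 * lcpLen x y := by
  induction x generalizing z y with
  | nil => simp [doublePath]
  | cons n x ih =>
    cases y with
    | nil => simp [doublePath]
    | cons m y =>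
      by_cases hnm : n = m
      · subst hnm
        simp only [doublePath, lcpLen, ↓reduceIte, ih]
        omega
      · simp [doublePath, lcpLen, hnm]

theorem treeDist_doublePath (g : List ℕ → ℕ → ℕ) (z x y : List ℕ) :
    treeDist (doublePath g z x) (doublePath g z y) = 2 * treeDist x y := by
  simp only [treeDist, length_doublePath, lcpLen_doublePath]
  push_cast
  ring

theorem doublePath_append_singleton (g : List ℕ → ℕ → ℕ) (z x : List ℕ) (n : ℕ) :
    doublePath g z (x ++ [n]) =
      doublePath g z x ++ [n] ++ [g (z ++ doublePath g z x) n] := by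
  induction x generalizing z with
  | nil => simp [doublePath]
  | cons m x ih => simp [doublePath, ih]

end Tree

theorem CoLipUB.pos {α β : Type*} {dα : α → α → ℝ} {dβ : β → β → ℝ} {f : α → β} {C : ℝ}
    (hf : CoLipUB dα dβ f C) {x y : α} (hα : 0 < dα x y) (hβ : 0 ≤ dβ (f x) (f y)) : 0 < C :=
  pos_of_mul_pos_left (hα.trans_le (hf x y)) hβ

section Seminorm

variable {Y : Type*} [AddCommGroup Y] [Module ℝ Y] {p : Seminorm ℝ Y} {t θ : ℝ}

theorem bddAbove_rolewiczSetN (p : Seminorm ℝ Y) (t : ℝ) : BddAbove (rolewiczSetN p t) := by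
  refine ⟨1, ?_⟩
  rintro _ ⟨x, hx, y, hy, -, rfl⟩
  have hbdd : BddBelow (range fun i => p (x - y i) / 2) :=
    ⟨0, forall_mem_range.2 fun i => by positivity⟩
  calc ⨅ i, p (x - y i) / 2 ≤ p (x - y 0) / 2 := ciInf_le hbdd 0
    _ ≤ (p x + p (y 0)) / 2 := by gcongr; exact map_sub_le_add p x (y 0)
    _ ≤ 1 := by linarith [hy 0]

theorem exists_seminorm_sub_lt_of_le_one (hθ : 1 - rolewiczModN p t < θ) {x : Y} {y : ℕ → Y}
    (hx : p x ≤ 1) (hy : ∀ i, p (y i) ≤ 1) (hsep : ∀ i j, i ≠ j → t ≤ p (y i - y j)) :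
    ∃ i, p (x - y i) < 2 * θ := by
  have hinf : ⨅ i, p (x - y i) / 2 ≤ sSup (rolewiczSetN p t) :=
    le_csSup (bddAbove_rolewiczSetN p t) ⟨x, hx, y, hy, hsep, rfl⟩
  rw [rolewiczModN, sub_sub_cancel] at hθ
  obtain ⟨i, hi⟩ := exists_lt_of_ciInf_lt (hinf.trans_lt hθ)
  exact ⟨i, by linarith⟩

theorem exists_seminorm_sub_lt (hθ : 1 - rolewiczModN p t < θ) {r : ℝ} (hr : 0 < r)
    {u w : Y} {y : ℕ → Y} (hu : p (u - w) ≤ r) (hy : ∀ i, p (y i - w) ≤ r)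
    (hsep : ∀ i j, i ≠ j → t * r ≤ p (y i - y j)) : ∃ i, p (u - y i) < 2 * (θ * r) := by
  have hscale (v : Y) : p (r⁻¹ • v) = p v / r := by
    rw [map_smul_eq_mul, Real.norm_of_nonneg (inv_nonneg.2 hr.le), inv_mul_eq_div]
  obtain ⟨i, hi⟩ := exists_seminorm_sub_lt_of_le_one hθ
    (x := r⁻¹ • (u - w)) (y := fun i => r⁻¹ • (y i - w))
    (by rwa [hscale, div_le_one hr])
    (fun i => by rw [hscale, div_le_one hr]; exact hy i)
    (fun i j hij => by
      rw [← smul_sub, sub_sub_sub_cancel_right, hscale, le_div_iff₀ hr]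
      exact hsep i j hij)
  rw [← smul_sub, sub_sub_sub_cancel_right, hscale, div_lt_iff₀ hr, mul_assoc] at hi
  exact ⟨i, hi⟩

/-- `f` maps the vertices of the countably branching tree of height `h` into `Y` without decreasing
distances, and maps each edge to a pair at `p`-distance at most `L`; in other words, `f` is a
bi-Lipschitz embedding of distortion at most `L`, normalized so that its inverse is `1`-Lipschitz.
The values of `f` on lists of length greater than `h` are irrelevant. -/
structure IsNoncontractiveTreeMap (p : Seminorm ℝ Y) (h : ℕ) (L : ℝ) (f : List ℕ → Y) : Prop where
  edge_le : ∀ x n, x.length < h → p (f (x ++ [n]) - f x) ≤ L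
  treeDist_le : ∀ x y, x.length ≤ h → y.length ≤ h → treeDist x y ≤ p (f x - f y)

namespace IsNoncontractiveTreeMap

variable {h n : ℕ} {L : ℝ} {f : List ℕ → Y}

theorem one_le (hf : IsNoncontractiveTreeMap p h L f) (hh : 0 < h) : 1 ≤ L :=
  calc (1 : ℝ) = treeDist ([] ++ [0]) [] := by
        rw [treeDist_append_left, List.length_singleton, Nat.cast_one]
    _ ≤ p (f ([] ++ [0]) - f []) :=
        hf.treeDist_le _ _ (by simpa using Nat.succ_le_of_lt hh) h.zero_le
    _ ≤ L := hf.edge_le [] 0 hh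

theorem exists_child_seminorm_sub_lt (hf : IsNoncontractiveTreeMap p h L f)
    (hθ : 1 - rolewiczModN p t < θ) (htL : t * L ≤ 2) {w : List ℕ} (hw : w.length < h)
    {u : Y} (hu : p (u - f w) ≤ L) : ∃ i, p (u - f (w ++ [i])) < 2 * (θ * L) := by
  have hL : 0 < L := zero_lt_one.trans_le (hf.one_le (Nat.zero_lt_of_lt hw))
  refine exists_seminorm_sub_lt hθ hL hu (fun i => hf.edge_le w i hw) fun i j hij => ?_
  calc t * L ≤ 2 := htL
    _ = treeDist (w ++ [i]) (w ++ [j]) := (treeDist_append_singleton_of_ne w hij).symm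
    _ ≤ p (f (w ++ [i]) - f (w ++ [j])) := hf.treeDist_le _ _ (by simpa) (by simpa)

theorem exists_half_height (hf : IsNoncontractiveTreeMap p (2 * h) L f)
    (hθ : 1 - rolewiczModN p t < θ) (htL : t * L ≤ 2) :
    ∃ f', IsNoncontractiveTreeMap p h (θ * L) f' := by
  have hgrandchild : ∀ z n, z.length + 1 < 2 * h →
      ∃ i, p (f z - f (z ++ [n] ++ [i])) < 2 * (θ * L) := fun z n hz => by
    refine hf.exists_child_seminorm_sub_lt hθ htL (by simpa) ?_
    rw [map_sub_rev]
    exact hf.edge_le z n (by omega)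
  choose! g hg using hgrandchild
  have hhalf (u v : Y) : p ((2⁻¹ : ℝ) • u - (2⁻¹ : ℝ) • v) = p (u - v) / 2 := by
    rw [← smul_sub, map_smul_eq_mul, norm_inv, Real.norm_ofNat, inv_mul_eq_div]
  refine ⟨fun x => (2⁻¹ : ℝ) • f (doublePath g [] x), fun x n hx => ?_, fun x y hx hy => ?_⟩
  · have hedge := hg (doublePath g [] x) n (by rw [length_doublePath]; omega)
    rw [hhalf, doublePath_append_singleton, List.nil_append, map_sub_rev]
    linarith
  · have hdist := hf.treeDist_le (doublePath g [] x) (doublePath g [] y)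
      (by rw [length_doublePath]; omega) (by rw [length_doublePath]; omega)
    rw [treeDist_doublePath] at hdist
    rw [hhalf]
    linarith

theorem one_le_pow_mul (hf : IsNoncontractiveTreeMap p (2 ^ n) L f) (ht : 0 ≤ t)
    (hθ : 1 - rolewiczModN p t < θ) (hθ1 : θ ≤ 1) (htL : t * L ≤ 2) : 1 ≤ θ ^ n * L := by
  induction n generalizing L f with
  | zero => simpa using hf.one_le (by simp)
  | succ n ih =>
    have hL : 0 ≤ L := zero_le_one.trans (hf.one_le (by positivity))
    rw [pow_succ'] at hf
    obtain ⟨f', hf'⟩ := hf.exists_half_height hθ htL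
    rw [pow_succ, mul_assoc]
    refine ih hf' (le_trans ?_ htL)
    gcongr
    exact mul_le_of_le_one_left hL hθ1

theorem exists_height_forall_lt {K : ℝ} (hK : 0 < K) (hβ : 0 < rolewiczModN p (2 / K)) :
    ∃ n : ℕ, ∀ L f, IsNoncontractiveTreeMap p (2 ^ n) L f → K < L := by
  obtain ⟨θ, hθ, hθ1⟩ : ∃ θ, max 0 (1 - rolewiczModN p (2 / K)) < θ ∧ θ < 1 :=
    exists_between (max_lt one_pos (by linarith))
  obtain ⟨hθ0, hθ⟩ := max_lt_iff.1 hθ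
  obtain ⟨n, hn⟩ := exists_pow_lt_of_lt_one (inv_pos.2 hK) hθ1
  refine ⟨n, fun L f hf => ?_⟩
  by_contra! hLK
  have htL : 2 / K * L ≤ 2 :=
    calc 2 / K * L ≤ 2 / K * K := by gcongr
      _ = 2 := div_mul_cancel₀ 2 hK.ne'
  have hlt : θ ^ n * L < 1 :=
    calc θ ^ n * L ≤ θ ^ n * K := by gcongr
      _ < K⁻¹ * K := by gcongr
      _ = 1 := inv_mul_cancel₀ hK.ne'
  exact hlt.not_ge (hf.one_le_pow_mul (by positivity) hθ hθ1.le htL)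

end IsNoncontractiveTreeMap

end Seminorm

section EquivalentNorm

variable {Y : Type*} [SeminormedAddCommGroup Y] [NormedSpace ℝ Y]

theorem IsEquivNorm.exists_seminorm {N : Y → ℝ} (hN : IsEquivNorm Y N) :
    ∃ p : Seminorm ℝ Y, ⇑p = N :=
  ⟨Seminorm.of N hN.1 hN.2.1, rfl⟩

theorem exists_isNoncontractiveTreeMap {p : Seminorm ℝ Y} {a b : ℝ} (ha : 0 < a) (hb : 0 ≤ b)
    (hap : ∀ y, a * ‖y‖ ≤ p y) (hpb : ∀ y, p y ≤ b * ‖y‖) {h : ℕ} (hh : 0 < h)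
    {f : TreeOmega h → Y} {L C : ℝ} (hL : LipUB (tDist h) (fun x y : Y => dist x y) f L)
    (hC : CoLipUB (tDist h) (fun x y : Y => dist x y) f C) :
    ∃ f', IsNoncontractiveTreeMap p h (b / a * (L * C)) f' := by
  have hC0 : 0 < C := by
    refine hC.pos (x := ⟨[0], hh⟩) (y := ⟨[], h.zero_le⟩) ?_ dist_nonneg
    simp [tDist, treeDist]
  let F (x : List ℕ) : Y := f ⟨x.take h, x.length_take_le h⟩
  have hF {x : List ℕ} (hx : x.length ≤ h) : F x = f ⟨x, hx⟩ :=
    congrArg f (Subtype.ext (List.take_of_length_le hx))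
  have hscale (u v : Y) : p ((C / a) • u - (C / a) • v) = C / a * p (u - v) := by
    rw [← smul_sub, map_smul_eq_mul, Real.norm_of_nonneg (by positivity)]
  refine ⟨fun x => (C / a) • F x, fun x n hx => ?_, fun x y hx hy => ?_⟩
  · have hxn : (x ++ [n]).length ≤ h := by simpa
    have hedge : ‖F (x ++ [n]) - F x‖ ≤ L := by
      rw [hF hxn, hF hx.le, ← dist_eq_norm]
      simpa [tDist, treeDist_append_left] using hL ⟨x ++ [n], hxn⟩ ⟨x, hx.le⟩
    calc p ((C / a) • F (x ++ [n]) - (C / a) • F x)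
        = C / a * p (F (x ++ [n]) - F x) := hscale _ _
      _ ≤ C / a * (b * ‖F (x ++ [n]) - F x‖) := by gcongr; exact hpb _
      _ ≤ C / a * (b * L) := by gcongr
      _ = b / a * (L * C) := by ring
  · have hdist : treeDist x y ≤ C * ‖F x - F y‖ := by
      rw [hF hx, hF hy, ← dist_eq_norm]
      exact hC ⟨x, hx⟩ ⟨y, hy⟩
    calc treeDist x y ≤ C * ‖F x - F y‖ := hdist
      _ = C / a * (a * ‖F x - F y‖) := by field_simp
      _ ≤ C / a * p (F x - F y) := by gcongr; exact hap _
      _ = p ((C / a) • F x - (C / a) • F y) := (hscale _ _).symm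

end EquivalentNorm

theorem tree_distortion_unbounded_general
    (Y : Type*) [SeminormedAddCommGroup Y] [NormedSpace ℝ Y] (hY : AdmitsBetaNorm Y) :
    ∀ M : ℝ, 0 < M → ∃ h : ℕ, 1 ≤ h ∧
      ENNReal.ofReal M < cDist (TreeOmega h) Y (tDist h) (fun a b : Y => dist a b) := by
  intro M hM
  obtain ⟨N, hN, hβ⟩ := hY
  obtain ⟨p, rfl⟩ := hN.exists_seminorm
  obtain ⟨-, -, a, b, ha, hab, hp⟩ := hN
  have hb : 0 < b := ha.trans_le hab
  -- Replacing the norm of `Y` by `p` costs a factor `b / a` in the distortion.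
  let K : ℝ := max 1 (b / a * (M + 1))
  have hK : 1 ≤ K := le_max_left _ _
  obtain ⟨n, hn⟩ := IsNoncontractiveTreeMap.exists_height_forall_lt
    (by positivity : 0 < K) (hβ (2 / K) (by positivity) (div_le_self zero_le_two hK))
  have hle : ENNReal.ofReal (M + 1) ≤
      cDist (TreeOmega (2 ^ n)) Y (tDist (2 ^ n)) (fun a b : Y => dist a b) := by
    refine le_iInf₂ ?_
    rintro _ ⟨f, -, L, C, hL, hC, rfl⟩
    obtain ⟨f', hf'⟩ := exists_isNoncontractiveTreeMap ha hb.le (fun y => (hp y).1)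
      (fun y => (hp y).2) (Nat.two_pow_pos n) hL hC
    have hlt : b / a * (M + 1) < b / a * (L * C) := (le_max_right _ _).trans_lt (hn _ f' hf')
    exact ENNReal.ofReal_le_ofReal (lt_of_mul_lt_mul_left hlt (by positivity)).le
  have hlt : ENNReal.ofReal M < ENNReal.ofReal (M + 1) :=
    (ENNReal.ofReal_lt_ofReal_iff (by positivity)).2 (lt_add_one M)
  exact ⟨2 ^ n, Nat.one_le_two_pow, hlt.trans_le hle⟩

/-- Theorem 2.5, first part: if `Y` admits an equivalent norm with
property (β) then `sup_{h ≥ 1} c_Y(T^ω_h) = ∞`. -/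
theorem tree_distortion_unbounded
    (Y : Type*) [NormedAddCommGroup Y] [NormedSpace ℝ Y] [CompleteSpace Y]
    (hY : AdmitsBetaNorm Y) :
    ∀ M : ℝ, 0 < M → ∃ h : ℕ, 1 ≤ h ∧
      ENNReal.ofReal M < cDist (TreeOmega h) Y (tDist h) (fun a b : Y => dist a b) :=
  tree_distortion_unbounded_general Y hY

end
end

section
/- Let p ∈ (1,∞), let T = (V,E,w) be a weighted tree rooted at a vertex r, let κ ≥ 1 be an integer, and let χ : E → C be a κ-caterpillar coloring of T. Then there exists a map f : V → ℓ^p(C) such that for all x, y ∈ V: ‖f(x) − f(y)‖_p ≤ (6·ln(2κ))^{1/p}·ρ_T(x,y) and ρ_T(x,y) ≤ 96·‖f(x) − f(y)‖_p. In particular, c_{ℓ^p(C)}(T) ≤ 96·(6·ln(2κ))^{1/p}. -/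
open Set Function Filter

open scoped ENNReal

attribute [local instance] Classical.propDecidable

noncomputable section

structure RootedWTree (V : Type*) where
  root : V
  parent : V → V
  w : V → ℝ
  parent_root : parent root = root
  reach : ∀ v : V, ∃ n : ℕ, parent^[n] v = root
  w_pos : ∀ v : V, v ≠ root → 0 < w v

namespace RootedWTree

variable {V : Type*} (T : RootedWTree V)

def up (v : V) (n : ℕ) : V := T.parent^[n] v

def Anc (u v : V) : Prop := ∃ n : ℕ, T.up v n = u

lemma exists_anc (x y : V) : ∃ n : ℕ, T.Anc (T.up x n) y := by
  obtain ⟨n, hn⟩ := T.reach x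
  obtain ⟨m, hm⟩ := T.reach y
  exact ⟨n, m, by simp only [up]; rw [hm, hn]⟩

def climb (x y : V) : ℕ := Nat.find (T.exists_anc x y)

def rho (x y : V) : ℝ :=
  (∑ k ∈ Finset.range (T.climb x y), T.w (T.up x k)) +
  (∑ k ∈ Finset.range (T.climb y x), T.w (T.up y k))

def pathEdges (x y : V) : List V :=
  ((List.range (T.climb x y)).map (fun k => T.up x k)) ++
  ((List.range (T.climb y x)).map (fun k => T.up y k))

def MonotoneClass {C : Type*} (χ : V → C) (c : C) : Prop :=
  (∀ u v : V, u ≠ T.root → v ≠ T.root → χ u = c → χ v = c → T.Anc u v ∨ T.Anc v u) ∧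
  (∀ (v : V) (n : ℕ), v ≠ T.root → χ v = c → T.up v n ≠ T.root → χ (T.up v n) = c →
    ∀ k ≤ n, χ (T.up v k) = c)

def IsMonotoneColoring {C : Type*} (χ : V → C) : Prop := ∀ c : C, T.MonotoneClass χ c

def IsBranch (P : Set V) : Prop := IsMaxChain (fun u v => T.Anc u v) P

def IsCaterpillar {C : Type*} (χ : V → C) (κ : ℕ) : Prop :=
  T.IsMonotoneColoring χ ∧
  ∀ P : Set V, T.IsBranch P → ∃ s : Finset C, s.card ≤ κ ∧ ∀ v ∈ P, v ≠ T.root → χ v ∈ s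

def colorLen {C : Type*} (χ : V → C) (c : C) (x y : V) : ℝ :=
  (((T.pathEdges x y).filter (fun e => decide (χ e = c))).map T.w).sum

def IsStrong {C : Type*} (χ : V → C) (δ : ℝ) : Prop :=
  T.IsMonotoneColoring χ ∧
  ∀ x y : V, x ≠ y →
    T.rho x y / 2 ≤
      (((T.pathEdges x y).filter
        (fun e => decide (δ * T.rho x y ≤ T.colorLen χ (χ e) x y))).map T.w).sum

end RootedWTree

/-!
Identify each edge with its lower endpoint. Along the path from the root to `x`, let `d_c(x)` be the
total weight of the edges of colour `c`, and let `D_c(x)` be the length of the part of the path that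
starts with its first edge of colour `c`. The coordinate `c` of the embedding grows along an edge
`v` at the rate `(d_c(v) / D_c(v))^{1/p}`, but only as long as `d_c(v)` is at most `2κ` times the
length `d_{χ v}(v)` that the current colour has reached.

Both bounds come from one observation: the colours with `D_c(x) ≤ t` only occupy the last stretch of
length `t` of the path, so their lengths `d_c(x)` add up to at most `t`. Ordering the colours by
`D_c(v)` then compares `∑ d_c(v) / D_c(v)`, the `p`-th power of the norm of the rate along `v`, with
an integral of `1 / s`, and gives `2 log (1 + ∑ d_c(v) / d_{χ v}(v)) ≤ 6 log (2κ)`. Conversely, it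
shows that half of the total length `r` of the colours above `x` that do not occur above `y` belongs
to colours with `D_c(x) > r / 2`. The truncation loses at most half of `D_c(x)`, so that the
coordinate `c` of `f x` is at least `(d_c(x) / D_c(x))^{1/p} D_c(x) / 2`, and `r ≤ 4 ‖f x - f y‖`
follows. Those edges of the path from `x` to `y` whose colour also occurs above the other endpoint
have a single colour and lie on one side of the branching point; they are handled by the
corresponding coordinate.
-/

/-- The total `d`-weight of a sublevel set `{D ≤ t}` is at most `t`. In the embedding, the index set
consists of the colours, or of the edges of one colour, on a path from the root. -/
def SublevelBounded {ι : Type*} (S : Finset ι) (d D : ι → ℝ) : Prop :=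
  ∀ t, 0 ≤ t → ∑ i ∈ S with D i ≤ t, d i ≤ t

lemma div_add_two_mul_log_le {δ σ d D : ℝ} (hδ : 0 < δ) (hσ : 0 ≤ σ) (hd : 0 ≤ d) (hδD : δ ≤ D)
    (hD : d + σ ≤ D) :
    d / D + 2 * Real.log (1 + σ / δ) ≤ 2 * Real.log (1 + (d + σ) / δ) := by
  have hlog : d / (δ + (d + σ)) ≤ Real.log (1 + (d + σ) / δ) - Real.log (1 + σ / δ) := by
    calc d / (δ + (d + σ)) = 1 - ((1 + (d + σ) / δ) / (1 + σ / δ))⁻¹ := by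
          field_simp
          ring
      _ ≤ Real.log ((1 + (d + σ) / δ) / (1 + σ / δ)) :=
          Real.one_sub_inv_le_log_of_pos (by positivity)
      _ = _ := Real.log_div (by positivity) (by positivity)
  have hdiv : d / D ≤ 2 * (d / (δ + (d + σ))) := by
    rw [← mul_div_assoc, div_le_div_iff₀ (hδ.trans_le hδD) (by positivity)]
    nlinarith
  linarith

lemma mul_rpow_sub_one_mul_le_rpow {p d D t a : ℝ} (hp : 1 ≤ p) (hd : 0 ≤ d) (ht : 0 < t)
    (htD : t ≤ D) (ha : (d / D) ^ (1 / p) * (D / 2) ≤ a) :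
    d * (t ^ (p - 1) * (1 / 2) ^ p) ≤ a ^ p := by
  have hp0 : 0 < p := zero_lt_one.trans_le hp
  have hD : 0 < D := ht.trans_le htD
  calc d * (t ^ (p - 1) * (1 / 2) ^ p) ≤ d * (D ^ (p - 1) * (1 / 2) ^ p) := by
        have := Real.rpow_le_rpow ht.le htD (sub_nonneg.2 hp)
        gcongr
    _ = ((d / D) ^ (1 / p) * (D / 2)) ^ p := by
        rw [Real.mul_rpow (by positivity) (by positivity), ← Real.rpow_mul (by positivity),
          one_div_mul_cancel hp0.ne', Real.rpow_one, div_eq_mul_one_div D 2,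
          Real.mul_rpow hD.le (by norm_num), Real.rpow_sub_one hD.ne']
        field_simp
    _ ≤ a ^ p := Real.rpow_le_rpow (by positivity) ha hp0.le

namespace SublevelBounded

variable {ι : Type*} {S S' : Finset ι} {d D : ι → ℝ}

lemma mono (h : SublevelBounded S d D) (hd : ∀ i ∈ S, 0 ≤ d i) (hS : S' ⊆ S) :
    SublevelBounded S' d D := fun t ht =>
  (Finset.sum_le_sum_of_subset_of_nonneg (Finset.filter_subset_filter _ hS)
    fun i hi _ => hd i (Finset.mem_of_mem_filter i hi)).trans (h t ht)

lemma sum_div_le_two_mul_log {δ : ℝ} (h : SublevelBounded S d D) (hδ : 0 < δ)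
    (hd : ∀ i ∈ S, 0 ≤ d i) (hD : ∀ i ∈ S, δ ≤ D i) :
    ∑ i ∈ S, d i / D i ≤ 2 * Real.log (1 + (∑ i ∈ S, d i) / δ) := by
  induction S using Finset.induction_on_max_value D with
  | empty => simp
  | insert a S ha hmax ih =>
    have hS := h.mono hd (Finset.subset_insert a S)
    rw [Finset.forall_mem_insert] at hd hD
    have htotal : ∑ i ∈ insert a S, d i ≤ D a := by
      have hle : ∀ i ∈ insert a S, D i ≤ D a := by simpa using hmax
      simpa only [Finset.filter_true_of_mem hle] using h (D a) (hδ.le.trans hD.1)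
    rw [Finset.sum_insert ha] at htotal ⊢
    rw [Finset.sum_insert ha]
    have hstep := div_add_two_mul_log_le hδ (Finset.sum_nonneg hd.2) hd.1 hD.1 htotal
    linarith [ih hS hd.2 hD.2]

lemma sum_div_four_rpow_le {a : ι → ℝ} {p : ℝ} (h : SublevelBounded S d D) (hp : 1 ≤ p)
    (hd : ∀ i ∈ S, 0 ≤ d i) (ha : ∀ i ∈ S, (d i / D i) ^ (1 / p) * (D i / 2) ≤ |a i|) :
    ((∑ i ∈ S, d i) / 4) ^ p ≤ ∑ i ∈ S, |a i| ^ p := by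
  have hp0 : 0 < p := zero_lt_one.trans_le hp
  set r := ∑ i ∈ S, d i
  have hr : 0 ≤ r := Finset.sum_nonneg hd
  rcases hr.eq_or_lt with hr0 | hr0
  · rw [← hr0, zero_div, Real.zero_rpow hp0.ne']
    exact Finset.sum_nonneg fun i _ => Real.rpow_nonneg (abs_nonneg _) p
  have hhalf : 0 < r / 2 := half_pos hr0
  have hlarge : r / 2 ≤ ∑ i ∈ S with ¬ D i ≤ r / 2, d i := by
    have hsplit := Finset.sum_filter_add_sum_filter_not S (fun i => D i ≤ r / 2) d
    linarith [h (r / 2) hhalf.le]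
  calc (r / 4) ^ p = r / 2 * ((r / 2) ^ (p - 1) * (1 / 2) ^ p) := by
        rw [show r / 4 = r / 2 * (1 / 2) by ring, Real.mul_rpow hhalf.le (by norm_num),
          Real.rpow_sub_one hhalf.ne']
        field_simp
    _ ≤ (∑ i ∈ S with ¬ D i ≤ r / 2, d i) * ((r / 2) ^ (p - 1) * (1 / 2) ^ p) := by
        gcongr
    _ = ∑ i ∈ S with ¬ D i ≤ r / 2, d i * ((r / 2) ^ (p - 1) * (1 / 2) ^ p) :=
        Finset.sum_mul ..
    _ ≤ ∑ i ∈ S with ¬ D i ≤ r / 2, |a i| ^ p := by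
        refine Finset.sum_le_sum fun i hi => ?_
        obtain ⟨hiS, hi⟩ := Finset.mem_filter.1 hi
        exact mul_rpow_sub_one_mul_le_rpow hp (hd i hiS) hhalf (not_le.1 hi).le (ha i hiS)
    _ ≤ ∑ i ∈ S, |a i| ^ p :=
        Finset.sum_le_sum_of_subset_of_nonneg (Finset.filter_subset _ _)
          fun i _ _ => Real.rpow_nonneg (abs_nonneg _) p

end SublevelBounded

namespace RootedWTree

variable {V C : Type*} {T : RootedWTree V} {χ : V → C} {κ : ℕ}

/-! ### Ancestors and paths from the root -/

lemma up_up (v : V) (m n : ℕ) : T.up (T.up v m) n = T.up v (m + n) := by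
  rw [up, up, up, ← iterate_add_apply, add_comm]

lemma up_root (n : ℕ) : T.up T.root n = T.root := iterate_fixed T.parent_root n

lemma eq_root_of_up_eq_self {v : V} {n : ℕ} (hn : n ≠ 0) (h : T.up v n = v) : v = T.root := by
  obtain ⟨m, hm⟩ := T.reach v
  have hle : m ≤ n * m := Nat.le_mul_of_pos_left m (Nat.pos_of_ne_zero hn)
  calc v = T.up v (n * m) := by
        rw [up, iterate_mul]
        exact (IsFixedPt.iterate h m).symm
    _ = T.up (T.up v m) (n * m - m) := by rw [up_up, Nat.add_sub_cancel' hle]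
    _ = T.root := by rw [show T.up v m = T.root from hm, up_root]

lemma Anc.refl (v : V) : T.Anc v v := ⟨0, rfl⟩

lemma Anc.root (v : V) : T.Anc T.root v := T.reach v

lemma Anc.trans {u v x : V} (huv : T.Anc u v) (hvx : T.Anc v x) : T.Anc u x := by
  obtain ⟨n, rfl⟩ := huv
  obtain ⟨m, rfl⟩ := hvx
  exact ⟨m + n, (up_up x m n).symm⟩

lemma Anc.antisymm {u v : V} (huv : T.Anc u v) (hvu : T.Anc v u) : u = v := by
  obtain ⟨n, rfl⟩ := huv
  obtain ⟨m, hm⟩ := hvu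
  rw [up_up] at hm
  rcases eq_or_ne (n + m) 0 with hnm | hnm
  · rw [(Nat.add_eq_zero_iff.1 hnm).1]
    rfl
  · rw [eq_root_of_up_eq_self hnm hm, up_root]

lemma up_anc_up {v : V} {m n : ℕ} (hmn : m ≤ n) : T.Anc (T.up v n) (T.up v m) :=
  ⟨n - m, by rw [up_up, Nat.add_sub_cancel' hmn]⟩

lemma Anc.total {u v x : V} (hu : T.Anc u x) (hv : T.Anc v x) : T.Anc u v ∨ T.Anc v u := by
  obtain ⟨n, rfl⟩ := hu
  obtain ⟨m, rfl⟩ := hv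
  exact (le_total m n).imp up_anc_up up_anc_up

lemma lt_climb_iff {x y : V} {k : ℕ} : k < T.climb x y ↔ ¬ T.Anc (T.up x k) y := by
  rw [climb, Nat.lt_find_iff]
  exact ⟨fun h => h k le_rfl, fun h m hm hy => h ((up_anc_up hm).trans hy)⟩

lemma mem_image_up_climb {u x y : V} :
    u ∈ (Finset.range (T.climb x y)).image (T.up x) ↔ T.Anc u x ∧ ¬ T.Anc u y := by
  simp only [Finset.mem_image, Finset.mem_range, lt_climb_iff]
  constructor
  · rintro ⟨k, hk, rfl⟩
    exact ⟨⟨k, rfl⟩, hk⟩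
  · rintro ⟨⟨k, rfl⟩, hk⟩
    exact ⟨k, hk, rfl⟩

lemma injOn_up_climb (x y : V) : InjOn (T.up x) (Finset.range (T.climb x y)) := by
  intro i hi j hj hij
  wlog hlt : i < j generalizing i j
  · rcases (not_lt.1 hlt).eq_or_lt with h | h
    · exact h.symm
    · exact (this hj hi hij.symm h).symm
  have hself : T.up (T.up x i) (j - i) = T.up x i := by
    rw [up_up, Nat.add_sub_cancel' hlt.le, hij]
  have hnot : ¬ T.Anc (T.up x i) y := lt_climb_iff.1 (Finset.mem_range.1 hi)
  rw [eq_root_of_up_eq_self (Nat.sub_ne_zero_of_lt hlt) hself] at hnot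
  exact absurd (Anc.root y) hnot

/-- The set of edges on the path from the root to `x`, each edge being represented by its lower
endpoint. -/
def rootPath (T : RootedWTree V) (x : V) : Finset V :=
  (Finset.range (T.climb x T.root)).image (T.up x)

lemma mem_rootPath {u x : V} : u ∈ T.rootPath x ↔ T.Anc u x ∧ u ≠ T.root := by
  rw [rootPath, mem_image_up_climb]
  refine and_congr_right fun _ => not_congr ⟨fun h => h.antisymm (Anc.root u), ?_⟩
  rintro rfl
  exact Anc.refl _

lemma root_notMem_rootPath (x : V) : T.root ∉ T.rootPath x := fun h => (mem_rootPath.1 h).2 rfl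

lemma self_mem_rootPath {v : V} (hv : v ≠ T.root) : v ∈ T.rootPath v :=
  mem_rootPath.2 ⟨Anc.refl v, hv⟩

lemma ne_root_of_mem_rootPath {u x : V} (h : u ∈ T.rootPath x) : x ≠ T.root := by
  rintro rfl
  obtain ⟨⟨n, rfl⟩, hne⟩ := mem_rootPath.1 h
  exact hne (up_root n)

lemma mem_rootPath_trans {u v x : V} (huv : u ∈ T.rootPath v) (hvx : v ∈ T.rootPath x) :
    u ∈ T.rootPath x :=
  mem_rootPath.2 ⟨(mem_rootPath.1 huv).1.trans (mem_rootPath.1 hvx).1, (mem_rootPath.1 huv).2⟩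

lemma rootPath_subset {v x : V} (hv : v ∈ T.rootPath x) : T.rootPath v ⊆ T.rootPath x :=
  fun _ hu => mem_rootPath_trans hu hv

lemma mem_rootPath_total {u v x : V} (hu : u ∈ T.rootPath x) (hv : v ∈ T.rootPath x) :
    u ∈ T.rootPath v ∨ v ∈ T.rootPath u := by
  rw [mem_rootPath] at hu hv
  exact (hu.1.total hv.1).imp (fun h => mem_rootPath.2 ⟨h, hu.2⟩) fun h => mem_rootPath.2 ⟨h, hv.2⟩

lemma rootPath_injective : Injective T.rootPath := by
  have hanc : ∀ {x y : V}, T.rootPath x ⊆ T.rootPath y → T.Anc x y := by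
    intro x y hxy
    rcases eq_or_ne x T.root with rfl | hx
    · exact Anc.root y
    · exact (mem_rootPath.1 (hxy (self_mem_rootPath hx))).1
  exact fun x y hxy => (hanc hxy.subset).antisymm (hanc hxy.superset)

lemma exists_highest {x : V} {s : Finset V} (hs : s ⊆ T.rootPath x) (hne : s.Nonempty) :
    ∃ m ∈ s, ∀ u ∈ s, m ∈ T.rootPath u := by
  obtain ⟨m, hm, hmin⟩ := s.exists_min_image (fun v => (T.rootPath v).card) hne
  refine ⟨m, hm, fun u hu => (mem_rootPath_total (hs hm) (hs hu)).elim id fun hum => ?_⟩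
  rw [Finset.eq_of_subset_of_card_le (rootPath_subset hum) (hmin u hu)]
  exact self_mem_rootPath (mem_rootPath.1 (hs hm)).2

lemma exists_lowest {x : V} {s : Finset V} (hs : s ⊆ T.rootPath x) (hne : s.Nonempty) :
    ∃ m ∈ s, ∀ u ∈ s, u ∈ T.rootPath m := by
  obtain ⟨m, hm, hmax⟩ := s.exists_max_image (fun v => (T.rootPath v).card) hne
  refine ⟨m, hm, fun u hu => (mem_rootPath_total (hs hu) (hs hm)).elim id fun hmu => ?_⟩
  rw [Finset.eq_of_subset_of_card_le (rootPath_subset hmu) (hmax u hu)]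
  exact self_mem_rootPath (mem_rootPath.1 (hs hu)).2

lemma rootPath_sdiff (x y : V) :
    T.rootPath x \ T.rootPath y = (Finset.range (T.climb x y)).image (T.up x) := by
  ext u
  rw [Finset.mem_sdiff, mem_rootPath, mem_rootPath, mem_image_up_climb]
  have hroot : ¬ T.Anc u y → u ≠ T.root := by
    rintro h rfl
    exact h (Anc.root y)
  tauto

/-! ### Lengths -/

/-- The total weight of a finite set of edges. -/
def len (T : RootedWTree V) (s : Finset V) : ℝ := ∑ v ∈ s, T.w v

lemma w_pos_of_mem {s : Finset V} {v : V} (hs : T.root ∉ s) (hv : v ∈ s) : 0 < T.w v :=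
  T.w_pos v (ne_of_mem_of_not_mem hv hs)

lemma len_mono {s t : Finset V} (hst : s ⊆ t) (ht : T.root ∉ t) : T.len s ≤ T.len t :=
  Finset.sum_le_sum_of_subset_of_nonneg hst fun _ hv _ => (w_pos_of_mem ht hv).le

lemma len_nonneg {s : Finset V} (hs : T.root ∉ s) : 0 ≤ T.len s :=
  Finset.sum_nonneg fun _ hv => (w_pos_of_mem hs hv).le

lemma len_pos {s : Finset V} (hs : T.root ∉ s) (hne : s.Nonempty) : 0 < T.len s :=
  Finset.sum_pos (fun _ hv => w_pos_of_mem hs hv) hne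

lemma root_notMem_rootPath_sdiff (x y : V) : T.root ∉ T.rootPath x \ T.rootPath y :=
  Finset.notMem_mono Finset.sdiff_subset (root_notMem_rootPath x)

lemma rho_eq (x y : V) :
    T.rho x y = T.len (T.rootPath x \ T.rootPath y) + T.len (T.rootPath y \ T.rootPath x) := by
  rw [rho, len, len, rootPath_sdiff, rootPath_sdiff, Finset.sum_image (injOn_up_climb x y),
    Finset.sum_image (injOn_up_climb y x)]

lemma rho_comm (x y : V) : T.rho x y = T.rho y x := add_comm _ _

lemma eq_of_rho_le_zero {x y : V} (h : T.rho x y ≤ 0) : x = y := by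
  have hsub : ∀ {a b : V}, T.len (T.rootPath a \ T.rootPath b) ≤ 0 →
      T.rootPath a ⊆ T.rootPath b := by
    intro a b hle
    by_contra hab
    exact hle.not_gt (len_pos (root_notMem_rootPath_sdiff a b) (Finset.sdiff_nonempty.2 hab))
  have hx := len_nonneg (root_notMem_rootPath_sdiff (T := T) x y)
  have hy := len_nonneg (root_notMem_rootPath_sdiff (T := T) y x)
  rw [rho_eq] at h
  exact rootPath_injective ((hsub (by linarith)).antisymm (hsub (by linarith)))

lemma norm_sum_rootPath_sub_le {E : Type*} [SeminormedAddCommGroup E] [NormedSpace ℝ E]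
    {F : V → E} {K : ℝ} (hF : ∀ v, v ≠ T.root → ‖F v‖ ≤ K) (x y : V) :
    ‖∑ v ∈ T.rootPath x, T.w v • F v - ∑ v ∈ T.rootPath y, T.w v • F v‖ ≤ K * T.rho x y := by
  have hside : ∀ a b : V, ‖∑ v ∈ T.rootPath a \ T.rootPath b, T.w v • F v‖ ≤
      K * T.len (T.rootPath a \ T.rootPath b) := by
    intro a b
    rw [len, Finset.mul_sum]
    refine norm_sum_le_of_le _ fun v hv => ?_
    have hroot := ne_of_mem_of_not_mem hv (root_notMem_rootPath_sdiff a b)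
    have hw := (T.w_pos v hroot).le
    rw [norm_smul, Real.norm_of_nonneg hw, mul_comm]
    exact mul_le_mul_of_nonneg_right (hF v hroot) hw
  rw [← Finset.sum_sdiff_sub_sum_sdiff, rho_eq, mul_add]
  exact (norm_sub_le _ _).trans (add_le_add (hside x y) (hside y x))

/-! ### Colours along a path -/

/-- The set of colours on the path from the root to `x`. -/
def colors (T : RootedWTree V) (χ : V → C) (x : V) : Finset C := (T.rootPath x).image χ

lemma mem_colors {c : C} {x : V} : c ∈ T.colors χ x ↔ ∃ u ∈ T.rootPath x, χ u = c :=
  Finset.mem_image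

lemma apply_mem_colors {u x : V} (hu : u ∈ T.rootPath x) : χ u ∈ T.colors χ x :=
  Finset.mem_image_of_mem χ hu

lemma colors_subset {v x : V} (hv : v ∈ T.rootPath x) : T.colors χ v ⊆ T.colors χ x :=
  Finset.image_subset_image (rootPath_subset hv)

lemma IsCaterpillar.card_colors_le (hχ : T.IsCaterpillar χ κ) (x : V) :
    (T.colors χ x).card ≤ κ := by
  have hchain : IsChain (fun u v => T.Anc u v) (T.rootPath x : Set V) := fun u hu v hv _ =>
    (mem_rootPath.1 hu).1.total (mem_rootPath.1 hv).1
  obtain ⟨M, hM, hsub⟩ := hchain.exists_maxChain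
  obtain ⟨s, hs, hMs⟩ := hχ.2 M hM
  refine (Finset.card_le_card (Finset.image_subset_iff.2 fun v hv => ?_)).trans hs
  exact hMs v (hsub hv) (mem_rootPath.1 hv).2

lemma IsMonotoneColoring.mem_rootPath_total (hχ : T.IsMonotoneColoring χ) {u v x y : V}
    (hu : u ∈ T.rootPath x) (hv : v ∈ T.rootPath y) (huv : χ u = χ v) :
    u ∈ T.rootPath v ∨ v ∈ T.rootPath u := by
  rw [mem_rootPath] at hu hv
  exact ((hχ (χ v)).1 u v hu.2 hv.2 huv rfl).imp (fun h => mem_rootPath.2 ⟨h, hu.2⟩)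
    fun h => mem_rootPath.2 ⟨h, hv.2⟩

lemma IsMonotoneColoring.apply_eq_of_between (hχ : T.IsMonotoneColoring χ) {u t v : V}
    (hut : u ∈ T.rootPath t) (htv : t ∈ T.rootPath v) (huv : χ u = χ v) : χ t = χ v := by
  have hv := ne_root_of_mem_rootPath htv
  obtain ⟨⟨j, rfl⟩, hu⟩ := mem_rootPath.1 hut
  obtain ⟨⟨k, rfl⟩, -⟩ := mem_rootPath.1 htv
  rw [up_up] at hu huv
  exact (hχ (χ v)).2 v (k + j) hv rfl hu huv k (Nat.le_add_right k j)

lemma IsMonotoneColoring.apply_ne_apply (hχ : T.IsMonotoneColoring χ) {x y v v' : V}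
    (hv : v ∈ T.rootPath x \ T.rootPath y) (hv' : v' ∈ T.rootPath y \ T.rootPath x) :
    χ v ≠ χ v' := by
  rw [Finset.mem_sdiff] at hv hv'
  intro h
  rcases hχ.mem_rootPath_total hv.1 hv'.1 h with h | h
  · exact hv.2 (mem_rootPath_trans h hv'.1)
  · exact hv'.2 (mem_rootPath_trans h hv.1)

lemma IsMonotoneColoring.exists_mem_inter_apply_eq (hχ : T.IsMonotoneColoring χ) {x y v : V}
    (hv : v ∈ T.rootPath x \ T.rootPath y) (hcolor : χ v ∈ T.colors χ y) :
    ∃ u ∈ T.rootPath x ∩ T.rootPath y, χ u = χ v := by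
  rw [Finset.mem_sdiff] at hv
  obtain ⟨u, huy, huv⟩ := mem_colors.1 hcolor
  have hu : u ∈ T.rootPath v := (hχ.mem_rootPath_total huy hv.1 huv).resolve_right fun hvu =>
    hv.2 (mem_rootPath_trans hvu huy)
  exact ⟨u, Finset.mem_inter.2 ⟨mem_rootPath_trans hu hv.1, huy⟩, huv⟩

lemma IsMonotoneColoring.exists_forall_apply_eq_of_mem_colors (hχ : T.IsMonotoneColoring χ)
    (x y : V) :
    ∃ c, (∀ v ∈ T.rootPath x \ T.rootPath y, χ v ∈ T.colors χ y → χ v = c) ∧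
      ∀ v ∈ T.rootPath y \ T.rootPath x, χ v ∈ T.colors χ x → χ v = c := by
  rcases (T.rootPath x ∩ T.rootPath y).eq_empty_or_nonempty with hempty | hne
  · have hnone : ∀ u, u ∉ T.rootPath x ∩ T.rootPath y := by simp [hempty]
    refine ⟨χ T.root, fun v hv hcolor => ?_, fun v hv hcolor => ?_⟩
    · obtain ⟨u, hu, -⟩ := hχ.exists_mem_inter_apply_eq hv hcolor
      exact absurd hu (hnone u)
    · obtain ⟨u, hu, -⟩ := hχ.exists_mem_inter_apply_eq hv hcolor
      exact absurd (Finset.mem_inter.2 (Finset.mem_inter.1 hu).symm) (hnone u)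
  obtain ⟨m, hm, hlowest⟩ := exists_lowest Finset.inter_subset_left hne
  have hbelow : ∀ {u v z z' : V}, u ∈ T.rootPath m → v ∈ T.rootPath z \ T.rootPath z' →
      m ∈ T.rootPath z → m ∈ T.rootPath z' → χ u = χ v → χ v = χ m := by
    intro u v z z' hum hv hmz hmz' huv
    rw [Finset.mem_sdiff] at hv
    have hmv : m ∈ T.rootPath v := (T.mem_rootPath_total hmz hv.1).resolve_right fun hvm =>
      hv.2 (mem_rootPath_trans hvm hmz')
    exact (hχ.apply_eq_of_between hum hmv huv).symm
  obtain ⟨hmx, hmy⟩ := Finset.mem_inter.1 hm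
  refine ⟨χ m, fun v hv hcolor => ?_, fun v hv hcolor => ?_⟩
  · obtain ⟨u, hu, huv⟩ := hχ.exists_mem_inter_apply_eq hv hcolor
    exact hbelow (hlowest u hu) hv hmx hmy huv
  · obtain ⟨u, hu, huv⟩ := hχ.exists_mem_inter_apply_eq hv hcolor
    exact hbelow (hlowest u (Finset.mem_inter.2 (Finset.mem_inter.1 hu).symm)) hv hmy hmx huv

/-- The edges of colour `c` on the path from the root to `x`. -/
def colorSegment (T : RootedWTree V) (χ : V → C) (c : C) (x : V) : Finset V :=
  {u ∈ T.rootPath x | χ u = c}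

/-- The edges on the path from the root to `x` from the first edge of colour `c` onwards; empty if
`c` does not occur. -/
def colorTail (T : RootedWTree V) (χ : V → C) (c : C) (x : V) : Finset V :=
  {u ∈ T.rootPath x | c ∈ T.colors χ u}

/-- The length `d_c(x)` of colour `c` on the path from the root to `x`. -/
def segmentLen (T : RootedWTree V) (χ : V → C) (c : C) (x : V) : ℝ := T.len (T.colorSegment χ c x)

/-- The distance `D_c(x)` from the start of colour `c` to `x`, on the path from the root to `x`;
zero if `c` does not occur. -/
def tailLen (T : RootedWTree V) (χ : V → C) (c : C) (x : V) : ℝ := T.len (T.colorTail χ c x)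

section Segment

variable {c : C} {u v x : V}

lemma mem_colorSegment : u ∈ T.colorSegment χ c x ↔ u ∈ T.rootPath x ∧ χ u = c :=
  Finset.mem_filter

lemma mem_colorTail : u ∈ T.colorTail χ c x ↔ u ∈ T.rootPath x ∧ c ∈ T.colors χ u :=
  Finset.mem_filter

lemma root_notMem_colorSegment : T.root ∉ T.colorSegment χ c x := fun h =>
  root_notMem_rootPath x (mem_colorSegment.1 h).1

lemma root_notMem_colorTail : T.root ∉ T.colorTail χ c x := fun h =>
  root_notMem_rootPath x (mem_colorTail.1 h).1

lemma self_apply_mem_colors (hu : u ∈ T.rootPath x) : χ u ∈ T.colors χ u :=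
  apply_mem_colors (self_mem_rootPath (mem_rootPath.1 hu).2)

lemma segmentLen_nonneg : 0 ≤ T.segmentLen χ c x := len_nonneg root_notMem_colorSegment

lemma segmentLen_le_tailLen : T.segmentLen χ c x ≤ T.tailLen χ c x := by
  refine len_mono (fun u hu => ?_) root_notMem_colorTail
  obtain ⟨hux, rfl⟩ := mem_colorSegment.1 hu
  exact mem_colorTail.2 ⟨hux, self_apply_mem_colors hux⟩

lemma tailLen_nonneg : 0 ≤ T.tailLen χ c x := len_nonneg root_notMem_colorTail

lemma segmentLen_pos (hc : c ∈ T.colors χ x) : 0 < T.segmentLen χ c x := by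
  obtain ⟨u, hu⟩ := mem_colors.1 hc
  exact len_pos root_notMem_colorSegment ⟨u, mem_colorSegment.2 hu⟩

lemma segmentLen_mono (hv : v ∈ T.rootPath x) : T.segmentLen χ c v ≤ T.segmentLen χ c x :=
  len_mono (Finset.filter_subset_filter _ (rootPath_subset hv)) root_notMem_colorSegment

lemma tailLen_mono (hv : v ∈ T.rootPath x) : T.tailLen χ c v ≤ T.tailLen χ c x :=
  len_mono (Finset.filter_subset_filter _ (rootPath_subset hv)) root_notMem_colorTail

lemma segmentLen_div_tailLen_nonneg : 0 ≤ T.segmentLen χ c x / T.tailLen χ c x :=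
  div_nonneg segmentLen_nonneg tailLen_nonneg

lemma segmentLen_div_tailLen_le_one : T.segmentLen χ c x / T.tailLen χ c x ≤ 1 :=
  div_le_one_of_le₀ segmentLen_le_tailLen tailLen_nonneg

lemma sum_segmentLen (S : Finset C) :
    ∑ c ∈ S, T.segmentLen χ c x = T.len {u ∈ T.rootPath x | χ u ∈ S} := by
  simp only [segmentLen, colorSegment, len]
  convert Finset.sum_fiberwise_eq_sum_filter (T.rootPath x) S χ T.w

lemma sublevelBounded_segmentLen (x : V) :
    SublevelBounded (T.colors χ x) (T.segmentLen χ · x) (T.tailLen χ · x) := by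
  intro t ht
  rw [sum_segmentLen]
  set s : Finset V := {u ∈ T.rootPath x | χ u ∈ {c ∈ T.colors χ x | T.tailLen χ c x ≤ t}}
  rcases s.eq_empty_or_nonempty with hempty | hne
  · rw [hempty]
    exact ht
  obtain ⟨m, hm, hhighest⟩ := exists_highest (Finset.filter_subset _ _) hne
  have hmt : T.tailLen χ (χ m) x ≤ t := (Finset.mem_filter.1 (Finset.mem_filter.1 hm).2).2
  refine (len_mono (fun u hu => ?_) root_notMem_colorTail).trans hmt
  exact mem_colorTail.2 ⟨Finset.mem_of_mem_filter u hu, apply_mem_colors (hhighest u hu)⟩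

lemma sublevelBounded_colorSegment (c : C) (x : V) :
    SublevelBounded (T.colorSegment χ c x) T.w fun v => T.segmentLen χ (χ v) v := by
  intro t ht
  set s : Finset V := {v ∈ T.colorSegment χ c x | T.segmentLen χ (χ v) v ≤ t}
  have hsc : ∀ u ∈ s, u ∈ T.rootPath x ∧ χ u = c := fun u hu =>
    mem_colorSegment.1 (Finset.mem_of_mem_filter u hu)
  rcases s.eq_empty_or_nonempty with hempty | hne
  · rw [hempty]
    exact ht
  obtain ⟨m, hm, hlowest⟩ := exists_lowest (fun u hu => (hsc u hu).1) hne
  refine (len_mono (fun u hu => ?_) root_notMem_colorSegment).trans (Finset.mem_filter.1 hm).2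
  exact mem_colorSegment.2 ⟨hlowest u hu, (hsc u hu).2.trans (hsc m hm).2.symm⟩

lemma len_filter_segmentLen_le {t : ℝ} (ht : 0 ≤ t) (x : V) :
    T.len {v ∈ T.rootPath x | T.segmentLen χ (χ v) v ≤ t} ≤ (T.colors χ x).card * t := by
  rw [len, ← Finset.sum_fiberwise_of_maps_to (t := T.colors χ x) (g := χ) fun v hv =>
    apply_mem_colors (Finset.mem_of_mem_filter v hv), ← nsmul_eq_mul]
  refine Finset.sum_le_card_nsmul _ _ _ fun c _ => ?_
  rw [Finset.filter_comm]
  exact sublevelBounded_colorSegment c x t ht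

lemma segmentLen_self_le_tailLen (hχ : T.IsMonotoneColoring χ) (hc : c ∈ T.colors χ v) :
    T.segmentLen χ (χ v) v ≤ T.tailLen χ c v := by
  refine len_mono (fun u hu => ?_) root_notMem_colorTail
  obtain ⟨huv, hu⟩ := mem_colorSegment.1 hu
  obtain ⟨t, htv, rfl⟩ := mem_colors.1 hc
  refine mem_colorTail.2 ⟨huv, ?_⟩
  rcases T.mem_rootPath_total huv htv with hut | htu
  · rw [hχ.apply_eq_of_between hut htv hu, ← hu]
    exact self_apply_mem_colors huv
  · exact apply_mem_colors htu

lemma segmentLen_self_eq_tailLen (hχ : T.IsMonotoneColoring χ) :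
    T.segmentLen χ (χ v) v = T.tailLen χ (χ v) v := by
  refine segmentLen_le_tailLen.antisymm (len_mono (fun u hu => ?_) root_notMem_colorSegment)
  obtain ⟨huv, hu⟩ := mem_colorTail.1 hu
  obtain ⟨t, htu, ht⟩ := mem_colors.1 hu
  exact mem_colorSegment.2 ⟨huv, hχ.apply_eq_of_between htu huv ht⟩

lemma segmentLen_div_tailLen_self (hχ : T.IsMonotoneColoring χ) (hv : v ≠ T.root) :
    T.segmentLen χ (χ v) v / T.tailLen χ (χ v) v = 1 := by
  rw [← segmentLen_self_eq_tailLen hχ]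
  exact div_self (segmentLen_pos (apply_mem_colors (self_mem_rootPath hv))).ne'

lemma segmentLen_eq_of_apply_ne (hχ : T.IsMonotoneColoring χ) (hv : v ∈ T.colorTail χ c x)
    (hne : χ v ≠ c) : T.segmentLen χ c x = T.segmentLen χ c v := by
  obtain ⟨hvx, hcv⟩ := mem_colorTail.1 hv
  obtain ⟨t, htv, rfl⟩ := mem_colors.1 hcv
  refine (segmentLen_mono hvx).antisymm' (len_mono (fun u hu => ?_) root_notMem_colorSegment)
  obtain ⟨hux, hut⟩ := mem_colorSegment.1 hu
  refine mem_colorSegment.2 ⟨(T.mem_rootPath_total hux hvx).resolve_right fun hvu => hne ?_, hut⟩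
  rw [hχ.apply_eq_of_between htv hvu hut.symm, hut]

lemma segmentLen_div_tailLen_le_of_mem_colorTail (hχ : T.IsMonotoneColoring χ)
    (hv : v ∈ T.colorTail χ c x) :
    T.segmentLen χ c x / T.tailLen χ c x ≤ T.segmentLen χ c v / T.tailLen χ c v := by
  obtain ⟨hvx, hcv⟩ := mem_colorTail.1 hv
  by_cases hc : χ v = c
  · subst hc
    rw [segmentLen_div_tailLen_self hχ (mem_rootPath.1 hvx).2]
    exact segmentLen_div_tailLen_le_one
  · rw [segmentLen_eq_of_apply_ne hχ hv hc]
    exact div_le_div_of_nonneg_left segmentLen_nonneg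
      ((segmentLen_pos hcv).trans_le segmentLen_le_tailLen) (tailLen_mono hvx)

end Segment

/-! ### The embedding -/

/-- The colours whose coordinates grow along the edge `v`. -/
def activeColors (T : RootedWTree V) (χ : V → C) (κ : ℕ) (v : V) : Finset C :=
  {c ∈ T.colors χ v | T.segmentLen χ c v ≤ 2 * κ * T.segmentLen χ (χ v) v}

/-- The rate of growth of the embedding along the edge `v`. -/
def increment (T : RootedWTree V) (χ : V → C) (κ : ℕ) (q : ℝ≥0∞) (v : V) :
    lp (fun _ : C => ℝ) q :=
  ∑ c ∈ T.activeColors χ κ v,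
    lp.single q c ((T.segmentLen χ c v / T.tailLen χ c v) ^ (1 / q.toReal))

/-- The embedding of the tree into `ℓ^q`, obtained by summing up the increments along the path from
the root. -/
def embedding (T : RootedWTree V) (χ : V → C) (κ : ℕ) (q : ℝ≥0∞) (x : V) :
    lp (fun _ : C => ℝ) q :=
  ∑ v ∈ T.rootPath x, T.w v • T.increment χ κ q v

section Embedding

variable {q : ℝ≥0∞} {c : C} {v x y : V}

lemma increment_apply (v : V) (c : C) :
    T.increment χ κ q v c = if c ∈ T.activeColors χ κ v then
      (T.segmentLen χ c v / T.tailLen χ c v) ^ (1 / q.toReal) else 0 := by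
  simp only [increment, lp.coeFn_sum, lp.coeFn_single, Finset.sum_apply, Finset.sum_pi_single]

lemma increment_apply_nonneg : 0 ≤ T.increment χ κ q v c := by
  rw [increment_apply]
  split_ifs
  · exact Real.rpow_nonneg segmentLen_div_tailLen_nonneg _
  · exact le_rfl

lemma increment_apply_le_one : T.increment χ κ q v c ≤ 1 := by
  rw [increment_apply]
  split_ifs
  · exact Real.rpow_le_one segmentLen_div_tailLen_nonneg segmentLen_div_tailLen_le_one
      (by positivity)
  · exact zero_le_one

lemma increment_apply_eq_zero (hc : c ∉ T.colors χ v) : T.increment χ κ q v c = 0 := by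
  have hinactive : c ∉ T.activeColors χ κ v := fun h => hc (Finset.mem_of_mem_filter c h)
  rw [increment_apply, if_neg hinactive]

lemma increment_apply_self (hκ : 1 ≤ κ) (hχ : T.IsMonotoneColoring χ) (hv : v ≠ T.root) :
    T.increment χ κ q v (χ v) = 1 := by
  have hκ' : (1 : ℝ) ≤ κ := Nat.one_le_cast.2 hκ
  have hactive : χ v ∈ T.activeColors χ κ v :=
    Finset.mem_filter.2 ⟨apply_mem_colors (self_mem_rootPath hv),
      le_mul_of_one_le_left segmentLen_nonneg (by linarith)⟩
  rw [increment_apply, if_pos hactive, segmentLen_div_tailLen_self hχ hv, Real.one_rpow]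

lemma sum_segmentLen_activeColors_le (hχ : T.IsCaterpillar χ κ) (v : V) :
    ∑ c ∈ T.activeColors χ κ v, T.segmentLen χ c v ≤ 2 * κ ^ 2 * T.segmentLen χ (χ v) v := by
  have hcard : ((T.activeColors χ κ v).card : ℝ) ≤ κ :=
    Nat.cast_le.2 ((Finset.card_filter_le _ _).trans (hχ.card_colors_le v))
  calc ∑ c ∈ T.activeColors χ κ v, T.segmentLen χ c v
      ≤ (T.activeColors χ κ v).card • (2 * κ * T.segmentLen χ (χ v) v) :=
        Finset.sum_le_card_nsmul _ _ _ fun c hc => (Finset.mem_filter.1 hc).2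
    _ ≤ κ * (2 * κ * T.segmentLen χ (χ v) v) := by
        have := segmentLen_nonneg (T := T) (χ := χ) (c := χ v) (x := v)
        rw [nsmul_eq_mul]
        gcongr
    _ = 2 * κ ^ 2 * T.segmentLen χ (χ v) v := by ring

lemma sum_segmentLen_div_tailLen_le (hκ : 1 ≤ κ) (hχ : T.IsCaterpillar χ κ) (hv : v ≠ T.root) :
    ∑ c ∈ T.activeColors χ κ v, T.segmentLen χ c v / T.tailLen χ c v ≤
      6 * Real.log (2 * κ) := by
  set δ := T.segmentLen χ (χ v) v
  set r := ∑ c ∈ T.activeColors χ κ v, T.segmentLen χ c v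
  have hκ' : (1 : ℝ) ≤ κ := Nat.one_le_cast.2 hκ
  have hδ : 0 < δ := segmentLen_pos (apply_mem_colors (self_mem_rootPath hv))
  have hr : 0 ≤ r := Finset.sum_nonneg fun _ _ => segmentLen_nonneg
  have hratio : r / δ ≤ 2 * κ ^ 2 := (div_le_iff₀ hδ).2 (sum_segmentLen_activeColors_le hχ v)
  calc ∑ c ∈ T.activeColors χ κ v, T.segmentLen χ c v / T.tailLen χ c v
      ≤ 2 * Real.log (1 + r / δ) :=
        ((sublevelBounded_segmentLen v).mono (fun _ _ => segmentLen_nonneg)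
          (Finset.filter_subset _ _)).sum_div_le_two_mul_log hδ (fun _ _ => segmentLen_nonneg)
          fun c hc => segmentLen_self_le_tailLen hχ.1 (Finset.mem_of_mem_filter c hc)
    _ ≤ 2 * Real.log ((2 * κ) ^ 3) := by
        gcongr
        nlinarith [mul_nonneg (sub_nonneg.2 hκ') (sq_nonneg (κ : ℝ))]
    _ = 6 * Real.log (2 * κ) := by
        rw [Real.log_pow]
        push_cast
        ring

lemma norm_increment_le (hq : 0 < q.toReal) (hκ : 1 ≤ κ) (hχ : T.IsCaterpillar χ κ)
    (hv : v ≠ T.root) :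
    ‖T.increment χ κ q v‖ ≤ (6 * Real.log (2 * κ)) ^ (1 / q.toReal) := by
  have hnorm : ‖T.increment χ κ q v‖ ^ q.toReal ≤ 6 * Real.log (2 * κ) := by
    rw [increment, lp.norm_sum_single hq
      (fun c => (T.segmentLen χ c v / T.tailLen χ c v) ^ (1 / q.toReal))]
    refine (Finset.sum_congr rfl fun c _ => ?_).trans_le (sum_segmentLen_div_tailLen_le hκ hχ hv)
    have hratio := segmentLen_div_tailLen_nonneg (T := T) (χ := χ) (c := c) (x := v)
    rw [Real.norm_of_nonneg (by positivity), one_div, Real.rpow_inv_rpow hratio hq.ne']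
  have hpow := Real.rpow_nonneg (lp.norm_nonneg' (T.increment χ κ q v)) q.toReal
  rw [one_div]
  exact (Real.le_rpow_inv_iff_of_pos (lp.norm_nonneg' _) (hpow.trans hnorm) hq).2 hnorm

lemma embedding_apply (x : V) (c : C) :
    T.embedding χ κ q x c = ∑ v ∈ T.rootPath x, T.w v * T.increment χ κ q v c := by
  rw [embedding, lp.coeFn_sum, Finset.sum_apply]
  rfl

lemma embedding_apply_eq_zero (hc : c ∉ T.colors χ x) : T.embedding χ κ q x c = 0 := by
  rw [embedding_apply]
  refine Finset.sum_eq_zero fun v hv => ?_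
  rw [increment_apply_eq_zero fun h => hc (colors_subset hv h), mul_zero]

lemma rpow_le_increment_apply (hχ : T.IsMonotoneColoring χ) (hv : v ∈ T.colorTail χ c x)
    (hlen : T.segmentLen χ c x ≤ 2 * κ * T.segmentLen χ (χ v) v) :
    (T.segmentLen χ c x / T.tailLen χ c x) ^ (1 / q.toReal) ≤ T.increment χ κ q v c := by
  obtain ⟨hvx, hcv⟩ := mem_colorTail.1 hv
  have hactive : c ∈ T.activeColors χ κ v :=
    Finset.mem_filter.2 ⟨hcv, (segmentLen_mono hvx).trans hlen⟩
  rw [increment_apply, if_pos hactive]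
  exact Real.rpow_le_rpow segmentLen_div_tailLen_nonneg
    (segmentLen_div_tailLen_le_of_mem_colorTail hχ hv) (by positivity)

lemma half_tailLen_le_len_filter (hκ : 1 ≤ κ) (hcard : (T.colors χ x).card ≤ κ) (c : C) :
    T.tailLen χ c x / 2 ≤
      T.len {v ∈ T.colorTail χ c x | T.segmentLen χ c x ≤ 2 * κ * T.segmentLen χ (χ v) v} := by
  set d := T.segmentLen χ c x
  have : (0 : ℝ) < κ := Nat.cast_pos.2 hκ
  have hd : 0 ≤ d := segmentLen_nonneg
  have hτ : 0 ≤ d / (2 * κ) := by positivity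
  have hskipped : T.len {v ∈ T.colorTail χ c x | ¬ d ≤ 2 * κ * T.segmentLen χ (χ v) v} ≤ d / 2 :=
    calc T.len {v ∈ T.colorTail χ c x | ¬ d ≤ 2 * κ * T.segmentLen χ (χ v) v}
        ≤ T.len {v ∈ T.rootPath x | T.segmentLen χ (χ v) v ≤ d / (2 * κ)} := by
          refine len_mono (fun v hv => ?_)
            (Finset.notMem_mono (Finset.filter_subset _ _) (root_notMem_rootPath x))
          obtain ⟨hv, hlt⟩ := Finset.mem_filter.1 hv
          refine Finset.mem_filter.2 ⟨(mem_colorTail.1 hv).1, ?_⟩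
          rw [le_div_iff₀' (by positivity)]
          exact (not_le.1 hlt).le
      _ ≤ (T.colors χ x).card * (d / (2 * κ)) := len_filter_segmentLen_le hτ x
      _ ≤ κ * (d / (2 * κ)) := by gcongr
      _ = d / 2 := by field_simp
  have hsplit : T.len {v ∈ T.colorTail χ c x | d ≤ 2 * κ * T.segmentLen χ (χ v) v} +
      T.len {v ∈ T.colorTail χ c x | ¬ d ≤ 2 * κ * T.segmentLen χ (χ v) v} = T.tailLen χ c x :=
    Finset.sum_filter_add_sum_filter_not _ _ _
  linarith [segmentLen_le_tailLen (T := T) (χ := χ) (c := c) (x := x)]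

lemma rpow_mul_half_tailLen_le_embedding_apply (hκ : 1 ≤ κ) (hχ : T.IsCaterpillar χ κ) :
    (T.segmentLen χ c x / T.tailLen χ c x) ^ (1 / q.toReal) * (T.tailLen χ c x / 2) ≤
      T.embedding χ κ q x c := by
  set s : Finset V :=
    {v ∈ T.colorTail χ c x | T.segmentLen χ c x ≤ 2 * κ * T.segmentLen χ (χ v) v}
  set ρ := (T.segmentLen χ c x / T.tailLen χ c x) ^ (1 / q.toReal)
  have hρ : 0 ≤ ρ := Real.rpow_nonneg segmentLen_div_tailLen_nonneg _
  have hsx : s ⊆ T.rootPath x := (Finset.filter_subset _ _).trans (Finset.filter_subset _ _)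
  have hw : ∀ v ∈ T.rootPath x, 0 ≤ T.w v := fun v hv =>
    (w_pos_of_mem (root_notMem_rootPath x) hv).le
  calc ρ * (T.tailLen χ c x / 2)
      ≤ ρ * T.len s := by
        gcongr
        exact half_tailLen_le_len_filter hκ (hχ.card_colors_le x) c
    _ = ∑ v ∈ s, T.w v * ρ := by rw [mul_comm, len, Finset.sum_mul]
    _ ≤ ∑ v ∈ s, T.w v * T.increment χ κ q v c := by
        refine Finset.sum_le_sum fun v hv => mul_le_mul_of_nonneg_left ?_ (hw v (hsx hv))
        obtain ⟨hv, hlen⟩ := Finset.mem_filter.1 hv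
        exact rpow_le_increment_apply hχ.1 hv hlen
    _ ≤ ∑ v ∈ T.rootPath x, T.w v * T.increment χ κ q v c :=
        Finset.sum_le_sum_of_subset_of_nonneg hsx fun v hv _ =>
          mul_nonneg (hw v hv) increment_apply_nonneg
    _ = T.embedding χ κ q x c := (embedding_apply x c).symm

lemma len_filter_notMem_colors_le (hq : 1 ≤ q.toReal) (hκ : 1 ≤ κ) (hχ : T.IsCaterpillar χ κ)
    (x y : V) :
    T.len {v ∈ T.rootPath x | χ v ∉ T.colors χ y} ≤
      4 * ‖T.embedding χ κ q x - T.embedding χ κ q y‖ := by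
  have hq0 : 0 < q.toReal := zero_lt_one.trans_le hq
  set N := T.colors χ x \ T.colors χ y with hN
  have hlen : T.len {v ∈ T.rootPath x | χ v ∉ T.colors χ y} = ∑ c ∈ N, T.segmentLen χ c x := by
    rw [sum_segmentLen]
    congr 1
    refine Finset.filter_congr fun v hv => ?_
    rw [hN, Finset.mem_sdiff, and_iff_right (apply_mem_colors hv)]
  have hcoord : ∀ c ∈ N, (T.segmentLen χ c x / T.tailLen χ c x) ^ (1 / q.toReal) *
      (T.tailLen χ c x / 2) ≤ |(T.embedding χ κ q x - T.embedding χ κ q y) c| := by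
    intro c hc
    rw [lp.coeFn_sub, Pi.sub_apply, embedding_apply_eq_zero (Finset.mem_sdiff.1 hc).2, sub_zero]
    exact (rpow_mul_half_tailLen_le_embedding_apply hκ hχ).trans (le_abs_self _)
  have hpow : ((∑ c ∈ N, T.segmentLen χ c x) / 4) ^ q.toReal ≤
      ‖T.embedding χ κ q x - T.embedding χ κ q y‖ ^ q.toReal :=
    calc ((∑ c ∈ N, T.segmentLen χ c x) / 4) ^ q.toReal
        ≤ ∑ c ∈ N, |(T.embedding χ κ q x - T.embedding χ κ q y) c| ^ q.toReal :=
          ((sublevelBounded_segmentLen x).mono (fun _ _ => segmentLen_nonneg)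
            Finset.sdiff_subset).sum_div_four_rpow_le hq (fun _ _ => segmentLen_nonneg) hcoord
      _ ≤ ‖T.embedding χ κ q x - T.embedding χ κ q y‖ ^ q.toReal := by
          simpa only [Real.norm_eq_abs] using
            lp.sum_rpow_le_norm_rpow hq0 (T.embedding χ κ q x - T.embedding χ κ q y) N
  have hsum : 0 ≤ (∑ c ∈ N, T.segmentLen χ c x) / 4 :=
    div_nonneg (Finset.sum_nonneg fun _ _ => segmentLen_nonneg) (by norm_num)
  have hquarter := (Real.rpow_le_rpow_iff hsum (lp.norm_nonneg' _) hq0).1 hpow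
  rw [hlen]
  linarith

lemma len_rootPath_sdiff_le (hq : 1 ≤ q.toReal) (hκ : 1 ≤ κ) (hχ : T.IsCaterpillar χ κ)
    (hnew : ∀ v ∈ T.rootPath x \ T.rootPath y, χ v ∉ T.colors χ y) :
    T.len (T.rootPath x \ T.rootPath y) ≤ 4 * ‖T.embedding χ κ q x - T.embedding χ κ q y‖ := by
  refine (len_mono (fun v hv => ?_) ?_).trans (len_filter_notMem_colors_le hq hκ hχ x y)
  · exact Finset.mem_filter.2 ⟨(Finset.mem_sdiff.1 hv).1, hnew v hv⟩
  · exact Finset.notMem_mono (Finset.filter_subset _ _) (root_notMem_rootPath x)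

lemma len_filter_apply_eq_le (hq : q ≠ 0) (hκ : 1 ≤ κ) (hχ : T.IsMonotoneColoring χ) (x y : V)
    (c : C) :
    T.len {v ∈ T.rootPath x \ T.rootPath y | χ v = c} ≤
      ‖T.embedding χ κ q x - T.embedding χ κ q y‖ + T.len (T.rootPath y \ T.rootPath x) := by
  have hw : ∀ {a b v : V}, v ∈ T.rootPath a \ T.rootPath b → 0 ≤ T.w v := fun hv =>
    (w_pos_of_mem (root_notMem_rootPath_sdiff _ _) hv).le
  have hx : T.len {v ∈ T.rootPath x \ T.rootPath y | χ v = c} ≤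
      ∑ v ∈ T.rootPath x \ T.rootPath y, T.w v * T.increment χ κ q v c := by
    rw [len, Finset.sum_filter]
    refine Finset.sum_le_sum fun v hv => ?_
    split_ifs with hc
    · have hroot := ne_of_mem_of_not_mem hv (root_notMem_rootPath_sdiff x y)
      rw [← hc, increment_apply_self hκ hχ hroot, mul_one]
    · exact mul_nonneg (hw hv) increment_apply_nonneg
  have hy : ∑ v ∈ T.rootPath y \ T.rootPath x, T.w v * T.increment χ κ q v c ≤
      T.len (T.rootPath y \ T.rootPath x) :=
    Finset.sum_le_sum fun v hv => mul_le_of_le_one_right (hw hv) increment_apply_le_one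
  have hcoord : (T.embedding χ κ q x - T.embedding χ κ q y) c =
      ∑ v ∈ T.rootPath x \ T.rootPath y, T.w v * T.increment χ κ q v c -
        ∑ v ∈ T.rootPath y \ T.rootPath x, T.w v * T.increment χ κ q v c := by
    rw [Finset.sum_sdiff_sub_sum_sdiff, lp.coeFn_sub, Pi.sub_apply, embedding_apply,
      embedding_apply]
  have hnorm := (le_abs_self _).trans
    (lp.norm_apply_le_norm hq (T.embedding χ κ q x - T.embedding χ κ q y) c)
  linarith

lemma rho_le_of_forall_notMem_colors [Fact (1 ≤ q)] (hq : q ≠ ∞) (hκ : 1 ≤ κ)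
    (hχ : T.IsCaterpillar χ κ)
    (hshared : ∀ v ∈ T.rootPath x \ T.rootPath y, χ v ∈ T.colors χ y → χ v = c)
    (hnew : ∀ v ∈ T.rootPath y \ T.rootPath x, χ v ∉ T.colors χ x) :
    T.rho x y ≤ 13 * ‖T.embedding χ κ q x - T.embedding χ κ q y‖ := by
  have hq1 : 1 ≤ q.toReal := (ENNReal.dichotomy q).resolve_left hq
  have hy := len_rootPath_sdiff_le hq1 hκ hχ hnew
  rw [norm_sub_rev] at hy
  have hold : T.len {v ∈ T.rootPath x \ T.rootPath y | χ v ∈ T.colors χ y} ≤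
      T.len {v ∈ T.rootPath x \ T.rootPath y | χ v = c} := by
    refine len_mono (fun v hv => ?_)
      (Finset.notMem_mono (Finset.filter_subset _ _) (root_notMem_rootPath_sdiff x y))
    obtain ⟨hv, hcolor⟩ := Finset.mem_filter.1 hv
    exact Finset.mem_filter.2 ⟨hv, hshared v hv hcolor⟩
  have hfresh : T.len {v ∈ T.rootPath x \ T.rootPath y | χ v ∉ T.colors χ y} ≤
      4 * ‖T.embedding χ κ q x - T.embedding χ κ q y‖ :=
    (len_mono (Finset.filter_subset_filter _ Finset.sdiff_subset)
      (Finset.notMem_mono (Finset.filter_subset _ _) (root_notMem_rootPath x))).trans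
      (len_filter_notMem_colors_le hq1 hκ hχ x y)
  have hc := len_filter_apply_eq_le (zero_lt_one.trans_le Fact.out : 0 < q).ne' hκ hχ.1 x y c
  have hsplit : T.len {v ∈ T.rootPath x \ T.rootPath y | χ v ∈ T.colors χ y} +
      T.len {v ∈ T.rootPath x \ T.rootPath y | χ v ∉ T.colors χ y} =
        T.len (T.rootPath x \ T.rootPath y) :=
    Finset.sum_filter_add_sum_filter_not _ _ _
  rw [rho_eq]
  linarith

theorem norm_embedding_sub_le [Fact (1 ≤ q)] (hq : q ≠ ∞) (hκ : 1 ≤ κ) (hχ : T.IsCaterpillar χ κ)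
    (x y : V) :
    ‖T.embedding χ κ q x - T.embedding χ κ q y‖ ≤
      (6 * Real.log (2 * κ)) ^ (1 / q.toReal) * T.rho x y :=
  norm_sum_rootPath_sub_le (fun _ hv => norm_increment_le
    (zero_lt_one.trans_le ((ENNReal.dichotomy q).resolve_left hq)) hκ hχ hv) x y

theorem rho_le_mul_norm_embedding_sub [Fact (1 ≤ q)] (hq : q ≠ ∞) (hκ : 1 ≤ κ)
    (hχ : T.IsCaterpillar χ κ) (x y : V) :
    T.rho x y ≤ 13 * ‖T.embedding χ κ q x - T.embedding χ κ q y‖ := by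
  obtain ⟨c, hcx, hcy⟩ := hχ.1.exists_forall_apply_eq_of_mem_colors x y
  by_cases hnew : ∀ v ∈ T.rootPath y \ T.rootPath x, χ v ∉ T.colors χ x
  · exact rho_le_of_forall_notMem_colors hq hκ hχ hcx hnew
  push Not at hnew
  obtain ⟨v, hv, hvx⟩ := hnew
  rw [rho_comm, norm_sub_rev]
  refine rho_le_of_forall_notMem_colors hq hκ hχ hcy fun u hu huy => ?_
  exact hχ.1.apply_ne_apply hu hv ((hcx u hu huy).trans (hcy v hv hvx).symm)

end Embedding

end RootedWTree

theorem caterpillar_embedding_general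
    {V C : Type*} (T : RootedWTree V) (p : ℝ) (hp : 1 ≤ p)
    (κ : ℕ) (hκ : 1 ≤ κ) (χ : V → C) (hχ : T.IsCaterpillar χ κ) :
    ∃ f : V → lp (fun _ : C => ℝ) (ENNReal.ofReal p),
      (∀ x y : V,
        ‖f x - f y‖ ≤ (6 * Real.log (2 * κ)) ^ (1 / p) * T.rho x y ∧
        T.rho x y ≤ 13 * ‖f x - f y‖) ∧
      cDist V (lp (fun _ : C => ℝ) (ENNReal.ofReal p)) T.rho
          (fun a b => ‖a - b‖) ≤
        ENNReal.ofReal (13 * (6 * Real.log (2 * κ)) ^ (1 / p)) := by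
  have : Fact (1 ≤ ENNReal.ofReal p) := ⟨ENNReal.one_le_ofReal.2 hp⟩
  set f := T.embedding χ κ (ENNReal.ofReal p)
  have hlip := RootedWTree.norm_embedding_sub_le (q := ENNReal.ofReal p) ENNReal.ofReal_ne_top hκ hχ
  have hcolip : ∀ x y, T.rho x y ≤ 13 * ‖f x - f y‖ :=
    RootedWTree.rho_le_mul_norm_embedding_sub ENNReal.ofReal_ne_top hκ hχ
  have hinj : Injective f := fun x y hxy =>
    RootedWTree.eq_of_rho_le_zero (by simpa [hxy] using hcolip x y)
  rw [ENNReal.toReal_ofReal (zero_le_one.trans hp)] at hlip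
  refine ⟨f, fun x y => ⟨hlip x y, hcolip x y⟩, ?_⟩
  rw [mul_comm]
  exact iInf₂_le _ ⟨f, hinj, _, _, hlip, hcolip, rfl⟩

/-- Theorem 3.4: a weighted rooted tree admitting a `κ`-caterpillar
coloring with colors in `C` embeds into `ℓ^p(C)` by a map `f` with
`‖f x - f y‖ ≤ (6 ln (2κ))^{1/p} ρ(x,y)` and `ρ(x,y) ≤ 96 ‖f x - f y‖`;
in particular `c_{ℓ^p(C)}(T) ≤ 96 (6 ln (2κ))^{1/p}`. -/
theorem caterpillar_embedding
    {V C : Type*} (T : RootedWTree V) (p : ℝ) (hp : 1 < p)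
    (κ : ℕ) (hκ : 1 ≤ κ) (χ : V → C) (hχ : T.IsCaterpillar χ κ) :
    ∃ f : V → lp (fun _ : C => ℝ) (ENNReal.ofReal p),
      (∀ x y : V,
        ‖f x - f y‖ ≤ (6 * Real.log (2 * κ)) ^ (1 / p) * T.rho x y ∧
        T.rho x y ≤ 96 * ‖f x - f y‖) ∧
      cDist V (lp (fun _ : C => ℝ) (ENNReal.ofReal p)) T.rho
          (fun a b => ‖a - b‖) ≤
        ENNReal.ofReal (96 * (6 * Real.log (2 * κ)) ^ (1 / p)) := by
  obtain ⟨f, hf, hdist⟩ := caterpillar_embedding_general T p hp.le κ hκ χ hχ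
  have hlog : 0 ≤ Real.log (2 * κ) := mod_cast Real.log_natCast_nonneg (2 * κ)
  refine ⟨f, fun x y => ⟨(hf x y).1, (hf x y).2.trans ?_⟩, hdist.trans ?_⟩
  · exact mul_le_mul_of_nonneg_right (by norm_num) (lp.norm_nonneg' _)
  · gcongr
    norm_num

end
end
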